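/- Let Q be a commutative Moufang loop and let φ, ψ be automorphisms of Q with x+φ(x) ∈ Z(Q) and x+ψ(x) ∈ Z(Q) for all x (i.e., φ and ψ are J-central). Then φ∘ψ = ψ∘φ if and only if φ̂∘ψ̂ = ψ̂∘φ̂, where φ̂ is the map x ↦ x+φ(x) and ψ̂ is the map x ↦ x+ψ(x). -/

import Mathlib

/-- A loop: a quasigroup with a two-sided neutral element. -/
structure Loop (Q : Type) where
  add : Q → Q → Q
  zero : Q
  addLeftBij : ∀ x, Function.Bijective fun y => add x y
  addRightBij : ∀ x, Function.Bijective fun y => add y x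
  zero_add : ∀ x, add zero x = x
  add_zero : ∀ x, add x zero = x

namespace Loop

/-- The center of a loop: elements commuting and associating with everything. -/
def center {Q : Type} (L : Loop Q) : Set Q :=
  {z | (∀ x, L.add z x = L.add x z) ∧
       (∀ x y, L.add z (L.add x y) = L.add (L.add z x) y) ∧
       (∀ x y, L.add x (L.add z y) = L.add (L.add x z) y) ∧
       (∀ x y, L.add x (L.add y z) = L.add (L.add x y) z)}

/-- A map `α` is central if `Z(Q) + α(x) = Z(Q) + x` for every `x`. -/
def IsCentral {Q : Type} (L : Loop Q) (α : Q → Q) : Prop :=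
  ∀ x, (fun z => L.add z (α x)) '' L.center = (fun z => L.add z x) '' L.center

/-- Automorphism of a loop: a bijective map respecting the operation. -/
def IsAut {Q : Type} (L : Loop Q) (f : Q → Q) : Prop :=
  Function.Bijective f ∧ ∀ x y, f (L.add x y) = L.add (f x) (f y)

/-- `neg` provides two-sided inverses for the loop. -/
def IsTwoSidedInv {Q : Type} (L : Loop Q) (neg : Q → Q) : Prop :=
  ∀ x, L.add x (neg x) = L.zero ∧ L.add (neg x) x = L.zero

/-- Commutative Moufang loop: commutative and satisfying the Moufang identity. -/
def IsCommMoufang {Q : Type} (L : Loop Q) : Prop :=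
  (∀ x y, L.add x y = L.add y x) ∧
  (∀ x y z, L.add x (L.add y (L.add x z)) = L.add (L.add (L.add x y) x) z)

end Loop

/-!
If `x + y` and `x + z` are central, then `x + ((x + y) + z) = (x + y) + (x + z)` is symmetric in
`y` and `z`; cancelling `x` gives `(x + y) + (z + w) = (x + z) + (y + w)` for every `w`.
With `y = ψ x`, `z = φ x` and `w = φ (ψ x)` this turns `φ̂ (ψ̂ x)` into
`(x + φ x) + (ψ x + φ (ψ x))`, while `ψ̂ (φ̂ x) = (x + φ x) + (ψ x + ψ (φ x))`; cancelling on the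
left compares `φ (ψ x)` with `ψ (φ x)`.
-/

section LeftCancelMagma

variable {M : Type*} [Add M] [IsLeftCancelAdd M]

theorem add_add_add_comm_of_mem_addCenter {x y z : M} (hy : x + y ∈ Set.addCenter M)
    (hz : x + z ∈ Set.addCenter M) (w : M) : (x + y) + (z + w) = (x + z) + (y + w) := by
  have swap : (x + y) + z = (x + z) + y := add_left_cancel <|
    calc x + ((x + y) + z) = (x + y) + (x + z) := (IsAddCentral.left_comm hy x z).symm
      _ = (x + z) + (x + y) := hy.comm (x + z)
      _ = x + ((x + z) + y) := IsAddCentral.left_comm hz x y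
  rw [hy.left_assoc, swap, ← hz.left_assoc]

theorem stmt_general (φ ψ : M →ₙ+ M) (hφ : ∀ x, x + φ x ∈ Set.addCenter M)
    (hψ : ∀ x, x + ψ x ∈ Set.addCenter M) :
    φ ∘ ψ = ψ ∘ φ ↔
      (fun x => x + φ x) ∘ (fun x => x + ψ x) = (fun x => x + ψ x) ∘ (fun x => x + φ x) := by
  have hat_hat (x : M) : (x + ψ x) + φ (x + ψ x) = (x + φ x) + (ψ x + φ (ψ x)) := by
    rw [map_add, add_add_add_comm_of_mem_addCenter (hψ x) (hφ x)]
  simp only [funext_iff, Function.comp_apply, hat_hat, map_add ψ, add_right_inj]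

end LeftCancelMagma

namespace Loop

variable {Q : Type} (L : Loop Q)

/-- The additive magma underlying a loop, through which Mathlib's results on magmas apply to it.
It is not an instance because `L` cannot be recovered from `Q`. -/
abbrev toAdd : Add Q := ⟨L.add⟩

theorem isLeftCancelAdd : @IsLeftCancelAdd Q L.toAdd :=
  letI := L.toAdd
  ⟨fun x _ _ h => (L.addLeftBij x).injective h⟩

theorem center_subset_addCenter : L.center ⊆ @Set.addCenter Q L.toAdd :=
  letI := L.toAdd
  fun _ ⟨comm, left_assoc, _, right_assoc⟩ =>
    { comm, left_assoc, right_assoc := fun x y => (right_assoc x y).symm }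

end Loop

open Loop in
/-- J-central automorphisms of a commutative Moufang loop commute iff their
hats commute. -/
theorem stmt {Q : Type} (L : Loop Q) (h : L.IsCommMoufang)
    (φ ψ : Q → Q) (hφ : L.IsAut φ) (hψ : L.IsAut ψ)
    (hφc : ∀ x, L.add x (φ x) ∈ L.center)
    (hψc : ∀ x, L.add x (ψ x) ∈ L.center) :
    φ ∘ ψ = ψ ∘ φ ↔
      (fun x => L.add x (φ x)) ∘ (fun x => L.add x (ψ x)) =
        (fun x => L.add x (ψ x)) ∘ (fun x => L.add x (φ x)) :=
  letI := L.toAdd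
  haveI := L.isLeftCancelAdd
  stmt_general ⟨φ, hφ.2⟩ ⟨ψ, hψ.2⟩
    (fun x => L.center_subset_addCenter (hφc x)) (fun x => L.center_subset_addCenter (hψc x))
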